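/- arXiv:1107.3055 — 3 statements merged into one kernel-verified Lean document; each statement's English description precedes it below -/
import Mathlib

section
/- Let p > 5 be a prime and λ ∈ X. If there exist two distinct positive roots γ₁ ≠ γ₂ of G₂ with p ∣ ⟨λ+ρ, γ₁∨⟩ and p ∣ ⟨λ+ρ, γ₂∨⟩, then p divides ⟨λ+ρ, γ∨⟩ for every positive root γ; equivalently λ + ρ ∈ pX, i.e., λ is a special weight. (This is the paper's assertion that, for p > 5, any weight lying in a 0-facette belongs to −ρ + pX.) -/
namespace G2

/-- The weight lattice of G₂, in coordinates w.r.t. the fundamental weights ω_α, ω_β. -/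
abbrev X : Type := ℤ × ℤ

/-- Half the sum of the positive roots, ρ = ω_α + ω_β. -/
def ρ : X := (1, 1)

/-- The six positive roots of G₂, in order α, β, α+β, 2α+β, 3α+β, 3α+2β. -/
def root : Fin 6 → X := ![(2, -1), (-3, 2), (-1, 1), (1, 0), (3, -1), (0, 1)]

/-- Coefficients of the coroot pairings: ⟨(x,y), γᵢ∨⟩ = aᵢ·x + bᵢ·y. -/
def coroot : Fin 6 → X := ![(1, 0), (0, 1), (1, 3), (2, 3), (1, 1), (1, 2)]

/-- The coroot pairing ⟨v, γᵢ∨⟩. -/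
def pair (i : Fin 6) (v : X) : ℤ := (coroot i).1 * v.1 + (coroot i).2 * v.2

def sMap : X → X := fun v => (-v.1, v.1 + v.2)

def tMap : X → X := fun v => (v.1 + 3 * v.2, -v.2)

/-- The simple reflection s = s_α. -/
def s : Equiv.Perm X :=
  ⟨sMap, sMap, fun v => by obtain ⟨a, b⟩ := v; simp [sMap],
    fun v => by obtain ⟨a, b⟩ := v; simp [sMap]⟩

/-- The simple reflection t = s_β. -/
def t : Equiv.Perm X :=
  ⟨tMap, tMap, fun v => by obtain ⟨a, b⟩ := v; simp [tMap, Prod.ext_iff],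
    fun v => by obtain ⟨a, b⟩ := v; simp [tMap, Prod.ext_iff]⟩

/-- The Weyl group W of G₂, generated by s and t. -/
def W : Subgroup (Equiv.Perm X) := Subgroup.closure {s, t}

/-- The dot action w·λ = w(λ+ρ) − ρ. -/
def dot (w : Equiv.Perm X) (l : X) : X := w (l + ρ) - ρ

/-- m·λ = m(λ+ρ) − ρ for an integer m. -/
def mdot (m : ℤ) (l : X) : X := m • (l + ρ) - ρ

/-- Dominant weights. -/
def dominant (l : X) : Prop := 0 ≤ l.1 ∧ 0 ≤ l.2

/-- Regular weights: no coroot pairing of λ+ρ vanishes. -/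
def regular (l : X) : Prop := ∀ i : Fin 6, pair i (l + ρ) ≠ 0

/-- The length of w: minimal length of a word in s,t expressing w. -/
noncomputable def len (w : Equiv.Perm X) : ℕ :=
  sInf {n | ∃ l : List (Equiv.Perm X),
    (∀ g ∈ l, g = s ∨ g = t) ∧ l.length = n ∧ l.prod = w}

/-- The set Pₙ of weights in the lowest pⁿ-alcoves. -/
def P (p : ℤ) (n : ℕ) : Set X := {l | ∀ i : Fin 6, |pair i (l + ρ)| < p ^ n}

/-- The set X_{pⁿ} of pⁿ-restricted dominant weights. -/
def Xpn (p : ℤ) (n : ℕ) : Set X :=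
  {l | dominant l ∧ pair 0 l < p ^ n ∧ pair 1 l < p ^ n}

/-- The bottom dominant alcove A₁. -/
def A1 (p : ℤ) : Set X :=
  {l | ∀ i : Fin 6, 0 < pair i (l + ρ) ∧ pair i (l + ρ) < p}

/-- The alcove A₂ adjacent to A₁ across its upper wall. -/
def A2 (p : ℤ) : Set X :=
  {l | 0 < (l + ρ).2 ∧ (l + ρ).1 + 3 * (l + ρ).2 < p ∧ p < 2 * (l + ρ).1 + 3 * (l + ρ).2}

/-- Underlying map of the affine reflection s_{γᵢ,mp} (as a map on λ+ρ translated back: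
this is the map whose dot action is λ ↦ λ − (⟨λ+ρ,γᵢ∨⟩ − mp)γᵢ). -/
def reflFun (p : ℤ) (i : Fin 6) (m : ℤ) : X → X :=
  fun v => v - (pair i v - m * p) • root i

lemma pair_root (i : Fin 6) : pair i (root i) = 2 := by
  fin_cases i <;> rfl

lemma pair_sub (i : Fin 6) (a b : X) : pair i (a - b) = pair i a - pair i b := by
  simp [pair]; ring

lemma pair_smul (i : Fin 6) (c : ℤ) (a : X) : pair i (c • a) = c * pair i a := by
  simp [pair, Prod.smul_fst, Prod.smul_snd, smul_eq_mul]; ring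

lemma reflFun_invol (p : ℤ) (i : Fin 6) (m : ℤ) (v : X) :
    reflFun p i m (reflFun p i m v) = v := by
  simp only [reflFun, pair_sub, pair_smul, pair_root]
  have : pair i v - (pair i v - m * p) * 2 - m * p = -(pair i v - m * p) := by ring
  rw [this, neg_smul, sub_neg_eq_add, sub_add_cancel]

/-- The affine reflection s_{γᵢ,mp}, as a permutation of X (acting through the dot action). -/
def refl (p : ℤ) (i : Fin 6) (m : ℤ) : Equiv.Perm X :=
  ⟨reflFun p i m, reflFun p i m, reflFun_invol p i m, reflFun_invol p i m⟩

/-- The affine Weyl group W_p, generated by the affine reflections. -/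
def Wp (p : ℤ) : Subgroup (Equiv.Perm X) :=
  Subgroup.closure {g | ∃ (i : Fin 6) (m : ℤ), g = refl p i m}


/-- For a prime p > 5, if two distinct positive roots γ₁ ≠ γ₂ satisfy
p ∣ ⟨λ+ρ,γᵢ∨⟩ then p divides all six coroot pairings of λ+ρ; equivalently
λ + ρ ∈ pX, i.e. λ is special. -/
theorem statement3 (p : ℤ) (hp : Prime p) (hp5 : 5 < p) (l : X)
    (i j : Fin 6) (hij : i ≠ j)
    (hi : p ∣ pair i (l + ρ)) (hj : p ∣ pair j (l + ρ)) :
    (∀ k : Fin 6, p ∣ pair k (l + ρ)) ∧ ∃ μ : X, l + ρ = p • μ := by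
  have hd : ∀ i j : Fin 6, i ≠ j →
      ((coroot i).1 * (coroot j).2 - (coroot j).1 * (coroot i).2 ≠ 0 ∧
      |(coroot i).1 * (coroot j).2 - (coroot j).1 * (coroot i).2| ≤ 3) := by
    decide
  obtain ⟨h0, h3⟩ := hd i j hij
  have hnd : ¬ p ∣ (coroot i).1 * (coroot j).2 - (coroot j).1 * (coroot i).2 := by
    intro h
    have := Int.le_of_dvd (abs_pos.mpr h0) ((dvd_abs _ _).mpr h)
    omega
  generalize l + ρ = v at *
  have hx : p ∣ v.1 := by
    refine (hp.dvd_or_dvd (?_ : p ∣ ((coroot i).1 * (coroot j).2 - (coroot j).1 * (coroot i).2) * v.1)).resolve_left hnd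
    have h := dvd_sub (hi.mul_left (coroot j).2) (hj.mul_left (coroot i).2)
    simp only [pair] at h
    ring_nf at h ⊢
    exact h
  have hy : p ∣ v.2 := by
    refine (hp.dvd_or_dvd (?_ : p ∣ ((coroot i).1 * (coroot j).2 - (coroot j).1 * (coroot i).2) * v.2)).resolve_left hnd
    have h := dvd_sub (hj.mul_left (coroot i).1) (hi.mul_left (coroot j).1)
    simp only [pair] at h
    ring_nf at h ⊢
    exact h
  refine ⟨fun k => dvd_add (hx.mul_left _) (hy.mul_left _), ?_⟩
  obtain ⟨a, ha⟩ := hx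
  obtain ⟨b, hb⟩ := hy
  exact ⟨(a, b), Prod.ext (by simpa using ha) (by simpa using hb)⟩

end G2
end

section
/- Let p > 5 be a prime and let λ ∈ X⁺ be a dominant weight with ⟨λ+ρ, (3α+2β)∨⟩ = p (a weight on the wall F₃/₄). Then λ is minimal among dominant weights with respect to the strong linkage relation at p: every μ ∈ X⁺ with μ ↑ λ satisfies μ = λ. -/
namespace G2

/-- μ ≤ λ : λ − μ is a nonnegative integer combination of the simple roots α, β. -/
def rootLe (μ l : X) : Prop :=
  ∃ a b : ℕ, l - μ = (a : ℤ) • root 0 + (b : ℤ) • root 1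

/-- One step of strong linkage: μ is related to s_{γ,mp}·μ whenever μ ≤ s_{γ,mp}·μ. -/
def linkStep (p : ℤ) (μ l : X) : Prop :=
  (∃ (i : Fin 6) (m : ℤ), l = dot (refl p i m) μ) ∧ rootLe μ l

/-- The strong linkage relation μ ↑ λ: reflexive–transitive closure of `linkStep`. -/
def strongLink (p : ℤ) : X → X → Prop := Relation.ReflTransGen (linkStep p)

def shortR : Finset X := {(2, -1), (-2, 1), (-1, 1), (1, -1), (1, 0), (-1, 0)}

lemma shortR_refl : ∀ i : Fin 6, ∀ r ∈ shortR, r - pair i r • root i ∈ shortR := by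
  decide

def Inv (p y : ℤ) (v : X) : Prop := ∃ r ∈ shortR, ∃ κ : X, v = y • r + p • κ

lemma Inv_refl (p y : ℤ) (i : Fin 6) (m : ℤ) (v : X) (h : Inv p y v) :
    Inv p y (reflFun p i m v) := by
  obtain ⟨r, hr, κ, rfl⟩ := h
  refine ⟨_, shortR_refl i r hr, κ - (pair i κ - m) • root i, ?_⟩
  ext <;> simp [reflFun, pair] <;> ring

lemma step_inv (p y : ℤ) (μ l : X) (h : linkStep p μ l) (hl : Inv p y (l + ρ)) :
    Inv p y (μ + ρ) ∧ pair 5 μ ≤ pair 5 l := by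
  obtain ⟨⟨i, m, rfl⟩, a, b, hab⟩ := h
  constructor
  · have h2 := Inv_refl p y i m _ hl
    have h3 : dot (refl p i m) μ + ρ = reflFun p i m (μ + ρ) := by
      simp [dot, refl]
    rwa [h3, reflFun_invol] at h2
  · have h1 := congrArg (pair 5) hab
    rw [pair_sub] at h1
    have h4 : pair 5 ((a : ℤ) • root 0 + (b : ℤ) • root 1) = b := by
      simp [pair, root, coroot]; ring
    omega

lemma link_inv (p y : ℤ) (μ l : X) (h : strongLink p μ l) (hl : Inv p y (l + ρ)) :
    Inv p y (μ + ρ) ∧ pair 5 μ ≤ pair 5 l := by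
  induction h using Relation.ReflTransGen.head_induction_on with
  | refl => exact ⟨hl, le_rfl⟩
  | head h1 _ ih =>
    have := step_inv p y _ _ h1 ih.1
    exact ⟨this.1, this.2.trans ih.2⟩

lemma kbound (p k c : ℤ) (hp : 0 < p) (j : ℤ) (h : 0 < c + p * k) (hc : c ≤ p * j) :
    1 - j ≤ k ∧ p * (1 - j) ≤ p * k := by
  have : 1 - j ≤ k := by
    by_contra hk
    have : k ≤ -j := by omega
    nlinarith
  exact ⟨this, by nlinarith⟩

/-- For a prime p > 5, any dominant weight λ with ⟨λ+ρ,(3α+2β)∨⟩ = p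
(a weight on the wall F₃/₄) is minimal among dominant weights for strong linkage:
every dominant μ with μ ↑ λ equals λ. -/
theorem statement8 (p : ℤ) (hp : Prime p) (hp5 : 5 < p) (l : X)
    (hdom : dominant l) (hwall : pair 5 (l + ρ) = p) :
    ∀ μ : X, dominant μ → strongLink p μ l → μ = l := by
  obtain ⟨x, y⟩ := l
  intro μ hμ hlink
  obtain ⟨hx, hy⟩ := hdom
  simp [pair, coroot, ρ] at hx hy hwall
  have hl : Inv p (y + 1) ((x, y) + ρ) := by
    refine ⟨(-2, 1), by decide, (1, 0), ?_⟩
    ext <;> simp [ρ]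
    linarith
  obtain ⟨⟨r, hr, ⟨k, n⟩, hrn⟩, hle⟩ := link_inv p (y + 1) μ _ hlink hl
  obtain ⟨a, b⟩ := μ
  obtain ⟨ha, hb⟩ := hμ
  simp [pair, coroot] at ha hb hle
  have hp0 : 0 < p := by omega
  simp only [shortR, Finset.mem_insert, Finset.mem_singleton] at hr
  rcases hr with rfl | rfl | rfl | rfl | rfl | rfl <;>
    simp [ρ] at hrn <;> obtain ⟨h1, h2⟩ := hrn
  · have := kbound p n (-(y+1)) hp0 0 (by linarith) (by linarith)
    exfalso; linarith [this.2]
  · have := kbound p n (y+1) hp0 1 (by linarith) (by linarith)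
    have := kbound p k (-2*(y+1)) hp0 0 (by linarith) (by linarith)
    ext <;> simp <;> linarith
  · have := kbound p n (y+1) hp0 1 (by linarith) (by linarith)
    have := kbound p k (-(y+1)) hp0 0 (by linarith) (by linarith)
    exfalso; linarith
  · have := kbound p n (-(y+1)) hp0 0 (by linarith) (by linarith)
    exfalso; linarith [this.2]
  · have := kbound p n 0 hp0 0 (by linarith) (by linarith)
    exfalso; linarith [this.2]
  · have := kbound p n 0 hp0 0 (by linarith) (by linarith)
    exfalso; linarith [this.2]


end G2
end

section
/- Let p > 5 be a prime and put A = (2p²−p)ω_α − p²ω_β + A₂. Then A ⊆ p²·(−2ω_β) + X_{p²} and A ⊆ p²·(ω_α−ω_β) − X_{p²}; moreover for every integer r ≥ 3, A ⊆ pʳ·(−ω_α−2ω_β) + X_{pʳ} and A ⊆ pʳ·(−ω_β) − X_{pʳ}. -/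
namespace G2

/-- The alcove A = (2p²−p)ω_α − p²ω_β + A₂. -/
def Aalc (p : ℤ) : Set X :=
  {l | ∃ a ∈ A2 p, l = ((2 * p ^ 2 - p, -(p ^ 2)) : X) + a}

/-- For a prime p > 5 and A = (2p²−p)ω_α − p²ω_β + A₂:
A ⊆ p²·(−2ω_β) + X_{p²}, A ⊆ p²·(ω_α−ω_β) − X_{p²}, and for every r ≥ 3,
A ⊆ pʳ·(−ω_α−2ω_β) + X_{pʳ} and A ⊆ pʳ·(−ω_β) − X_{pʳ}. -/
theorem statement10 (p : ℤ) (hp : Prime p) (hp5 : 5 < p) :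
    (∀ l ∈ Aalc p, ∃ σ ∈ Xpn p 2, l = mdot (p ^ 2) ((0, -2) : X) + σ) ∧
    (∀ l ∈ Aalc p, ∃ σ ∈ Xpn p 2, l = mdot (p ^ 2) ((1, -1) : X) - σ) ∧
    (∀ r : ℕ, 3 ≤ r →
      (∀ l ∈ Aalc p, ∃ σ ∈ Xpn p r, l = mdot (p ^ r) ((-1, -2) : X) + σ) ∧
      (∀ l ∈ Aalc p, ∃ σ ∈ Xpn p r, l = mdot (p ^ r) ((0, -1) : X) - σ)) := by
  have hc : ∀ l ∈ Aalc p, ∃ x y : ℤ, 0 < y ∧ 0 < x ∧ x + 3 * y < p ∧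
      l = (2 * p ^ 2 - p + x - 1, -(p ^ 2) + y - 1) := by
    rintro l ⟨⟨a, b⟩, ⟨h1, h2, h3⟩, rfl⟩
    simp only [ρ, Prod.fst_add, Prod.snd_add, Prod.mk_add_mk] at h1 h2 h3
    refine ⟨a + 1, b + 1, h1, by omega, h2, ?_⟩
    simp only [Prod.mk_add_mk, Prod.mk.injEq]
    constructor <;> ring
  have hpp : 5 * p < p ^ 2 := by nlinarith
  refine ⟨?_, ?_, fun r hr => ?_⟩
  · intro l hl
    obtain ⟨x, y, hy, hx, hxy, rfl⟩ := hc l hl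
    refine ⟨(p ^ 2 - p + x, y), ?_, ?_⟩
    · simp [Xpn, dominant, pair, coroot]
      omega
    · simp [mdot, ρ]
      constructor <;> ring
  · intro l hl
    obtain ⟨x, y, hy, hx, hxy, rfl⟩ := hc l hl
    refine ⟨(p - x, p ^ 2 - y), ?_, ?_⟩
    · simp [Xpn, dominant, pair, coroot]
      omega
    · simp [mdot, ρ]
      constructor <;> ring
  have hr3 : 5 * p ^ 2 < p ^ r := by
    have : p ^ 3 ≤ p ^ r := pow_le_pow_right₀ (by omega) hr
    nlinarith
  constructor
  · intro l hl
    obtain ⟨x, y, hy, hx, hxy, rfl⟩ := hc l hl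
    refine ⟨(2 * p ^ 2 - p + x, p ^ r - p ^ 2 + y), ?_, ?_⟩
    · simp [Xpn, dominant, pair, coroot]
      omega
    · simp [mdot, ρ]
      constructor <;> ring
  · intro l hl
    obtain ⟨x, y, hy, hx, hxy, rfl⟩ := hc l hl
    refine ⟨(p ^ r - 2 * p ^ 2 + p - x, p ^ 2 - y), ?_, ?_⟩
    · simp [Xpn, dominant, pair, coroot]
      omega
    · simp [mdot, ρ]
      constructor <;> ring

end G2
end
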